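/- arXiv:1503.00093 — 2 statements merged into one kernel-verified Lean document; each statement's English description precedes it below -/
import Mathlib

section
/- Let p > 2. There is a constant C = C(p) such that for every Schwartz function G : ℂ → ℂ and every k ∈ ℂ with k ≠ 0, ‖∂̄⁻¹[e_{−k} G]‖_{L^∞(ℂ)} ≤ C |k|^{−1} ( ‖∂̄G‖_{L^p(ℂ)} + ‖∂̄G‖_{L^{p'}(ℂ)} + ‖G‖_{L^∞(ℂ)} ), where p' = p/(p−1). -/
open MeasureTheory Complex ComplexConjugate Filter Bornology
open scoped ENNReal Topology SchwartzMap

noncomputable section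

/-- `e_k(z) = exp(i(conj k · z + k · conj z)/2)`. -/
def ek (k z : ℂ) : ℂ := Complex.exp (Complex.I * (conj k * z + k * conj z) / 2)

/-- The solid Cauchy transform `∂̄⁻¹[h](z) = (1/π) ∫ h(w)/(z-w) dA(w)`. -/
def dbarInv (h : ℂ → ℂ) (z : ℂ) : ℂ := (Real.pi : ℂ)⁻¹ * ∫ w : ℂ, h w / (z - w)

/-- The solid Cauchy transform `∂_z⁻¹[h](z) = (1/π) ∫ h(w)/(conj z - conj w) dA(w)`. -/
def dzInv (h : ℂ → ℂ) (z : ℂ) : ℂ := (Real.pi : ℂ)⁻¹ * ∫ w : ℂ, h w / (conj z - conj w)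

/-- The operator `S^k_q[F] = ∂̄⁻¹[e_{-k} q ∂_z⁻¹[e_k conj(q) F]]`. -/
def Sk (k : ℂ) (q F : ℂ → ℂ) : ℂ → ℂ :=
  dbarInv fun z => ek (-k) z * q z * dzInv (fun w => ek k w * conj (q w) * F w) z

/-- The Fourier transform on `ℂ ≅ ℝ²`. -/
def FT (f : ℂ → ℂ) (ξ : ℂ) : ℂ :=
  ∫ z : ℂ, Complex.exp (-(2 * Real.pi * Complex.I) * ((z.re * ξ.re + z.im * ξ.im : ℝ) : ℂ)) * f z

/-- The inverse Fourier transform on `ℂ ≅ ℝ²`. -/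
def FTinv (f : ℂ → ℂ) (x : ℂ) : ℂ :=
  ∫ ξ : ℂ, Complex.exp ((2 * Real.pi * Complex.I) * ((x.re * ξ.re + x.im * ξ.im : ℝ) : ℂ)) * f ξ

/-- `D^s`, the Fourier multiplier with symbol `|ξ|^s`. -/
def Ds (s : ℝ) (f : ℂ → ℂ) : ℂ → ℂ :=
  FTinv fun ξ => ((‖ξ‖ ^ s : ℝ) : ℂ) * FT f ξ

/-- The weighted Sobolev norm
`‖q‖_{H^{s,s}} = max {‖q‖₂, ‖D^s q‖₂, ‖|·|^s q‖₂}`, where by Plancherel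
`‖D^s q‖₂ = ‖ |ξ|^s (FT q)(ξ) ‖₂`. -/
def HssNorm (s : ℝ) (q : ℂ → ℂ) : ℝ≥0∞ :=
  max (eLpNorm q 2 volume)
    (max (eLpNorm (fun ξ : ℂ => ((‖ξ‖ ^ s : ℝ) : ℂ) * FT q ξ) 2 volume)
      (eLpNorm (fun z : ℂ => ((‖z‖ ^ s : ℝ) : ℂ) * q z) 2 volume))

/-- The Cauchy–Riemann operator `∂̄ = (∂/∂z₁ + i ∂/∂z₂)/2`. -/
def dbar (G : ℂ → ℂ) (z : ℂ) : ℂ := (fderiv ℝ G z 1 + Complex.I * fderiv ℝ G z Complex.I) / 2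

end

theorem memLp_inv_indicator_ball {q : ℝ} (hq : 0 < q) (hq2 : q < 2) :
    MemLp ((Metric.ball (0 : ℂ) 1).indicator fun w => w⁻¹) (ENNReal.ofReal q) volume := by
  have hmeas : AEStronglyMeasurable ((Metric.ball (0 : ℂ) 1).indicator fun w => w⁻¹) volume :=
    (measurable_inv.indicator measurableSet_ball).aestronglyMeasurable
  rw [← integrable_norm_rpow_iff hmeas (by simpa using hq) (by simp),
    ENNReal.toReal_ofReal hq.le]
  have hradial : Integrable (fun w : ℂ => (Set.Iio (1 : ℝ)).indicator (fun r => r ^ (-q)) ‖w‖) := by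
    rw [integrable_fun_norm_addHaar (E := ℂ) volume
      (f := (Set.Iio (1 : ℝ)).indicator fun r => r ^ (-q))]
    have : IntegrableOn (fun r : ℝ => r ^ (1 - q)) (Set.Ioo 0 1) :=
      (intervalIntegral.integrableOn_Ioo_rpow_iff one_pos).2 (by linarith)
    rw [← integrable_indicator_iff measurableSet_Ioo] at this
    refine this.integrableOn.congr_fun (fun r hr => ?_) measurableSet_Ioi
    have hr : 0 < r := hr
    by_cases h : r < 1
    · simp [h, hr, Complex.finrank_real_complex, sub_eq_add_neg, Real.rpow_add hr]
    · simp [h]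
  refine hradial.congr (.of_forall fun w => ?_)
  by_cases h : ‖w‖ < 1
  · simp [h, Real.rpow_neg, Real.inv_rpow]
  · simp [h, hq.ne']

theorem memLp_inv_indicator_compl_ball {q : ℝ} (hq : 2 < q) :
    MemLp ((Metric.ball (0 : ℂ) 1)ᶜ.indicator fun w => w⁻¹) (ENNReal.ofReal q) volume := by
  have hq0 : 0 < q := by linarith
  have hmeas : AEStronglyMeasurable ((Metric.ball (0 : ℂ) 1)ᶜ.indicator fun w => w⁻¹) volume :=
    (measurable_inv.indicator measurableSet_ball.compl).aestronglyMeasurable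
  rw [← integrable_norm_rpow_iff hmeas (by simpa using hq0) (by simp),
    ENNReal.toReal_ofReal hq0.le]
  have hradial : Integrable (fun w : ℂ => (Set.Ici (1 : ℝ)).indicator (fun r => r ^ (-q)) ‖w‖) := by
    rw [integrable_fun_norm_addHaar (E := ℂ) volume
      (f := (Set.Ici (1 : ℝ)).indicator fun r => r ^ (-q))]
    have : IntegrableOn (fun r : ℝ => r ^ (1 - q)) (Set.Ici 1) :=
      (integrableOn_Ici_iff_integrableOn_Ioi (by simp)).2
        (integrableOn_Ioi_rpow_of_lt (by linarith) one_pos)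
    rw [← integrable_indicator_iff measurableSet_Ici] at this
    refine this.integrableOn.congr_fun (fun r hr => ?_) measurableSet_Ioi
    have hr : 0 < r := hr
    by_cases h : 1 ≤ r
    · simp [h, Complex.finrank_real_complex, sub_eq_add_neg, Real.rpow_add hr]
    · simp [h]
  refine hradial.congr (.of_forall fun w => ?_)
  by_cases h : 1 ≤ ‖w‖
  · simp [h, Real.rpow_neg, Real.inv_rpow]
  · simp [h, hq0.ne']

theorem exists_eLpNorm_one_inv_mul_le {p : ℝ} (hp : 2 < p) :
    ∃ K : ℝ, 0 ≤ K ∧ ∀ g : ℂ → ℂ, AEStronglyMeasurable g volume →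
      eLpNorm (fun w => w⁻¹ * g w) 1 volume ≤
        ENNReal.ofReal K * (eLpNorm g (ENNReal.ofReal p) volume +
          eLpNorm g (ENNReal.ofReal (p / (p - 1))) volume) := by
  have hp1 : 0 < p - 1 := by linarith
  have hq0 : 0 < p / (p - 1) := by positivity
  have hq2 : p / (p - 1) < 2 := by rw [div_lt_iff₀ hp1]; linarith
  have hconj : p.HolderConjugate (p / (p - 1)) := .conjExponent (by linarith)
  have h1 := memLp_inv_indicator_ball hq0 hq2
  have h2 := memLp_inv_indicator_compl_ball hp
  set κ₁ : ℂ → ℂ := (Metric.ball (0 : ℂ) 1).indicator fun w => w⁻¹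
  set κ₂ : ℂ → ℂ := (Metric.ball (0 : ℂ) 1)ᶜ.indicator fun w => w⁻¹
  have hκ : ∀ w, w⁻¹ = κ₁ w + κ₂ w := fun w =>
    (congrFun (Set.indicator_self_add_compl (Metric.ball (0 : ℂ) 1) fun w => w⁻¹) w).symm
  have : ENNReal.HolderConjugate (ENNReal.ofReal p) (ENNReal.ofReal (p / (p - 1))) :=
    hconj.ennrealOfReal
  have := ENNReal.HolderConjugate.symm (p := ENNReal.ofReal p)
    (q := ENNReal.ofReal (p / (p - 1)))
  set M := eLpNorm κ₁ (ENNReal.ofReal (p / (p - 1))) volume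
  set N := eLpNorm κ₂ (ENNReal.ofReal p) volume
  have hMN : M + N ≠ ⊤ := ENNReal.add_ne_top.2 ⟨h1.2.ne, h2.2.ne⟩
  refine ⟨(M + N).toReal, ENNReal.toReal_nonneg, fun g hg => ?_⟩
  rw [ENNReal.ofReal_toReal hMN]
  calc eLpNorm (fun w => w⁻¹ * g w) 1 volume
      = eLpNorm (κ₁ • g + κ₂ • g) 1 volume := by
        congr 1; ext w; simp [hκ w, add_mul]
    _ ≤ eLpNorm (κ₁ • g) 1 volume + eLpNorm (κ₂ • g) 1 volume :=
        eLpNorm_add_le (h1.1.smul hg) (h2.1.smul hg) le_rfl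
    _ ≤ M * eLpNorm g (ENNReal.ofReal p) volume +
          N * eLpNorm g (ENNReal.ofReal (p / (p - 1))) volume :=
        add_le_add (eLpNorm_smul_le_mul_eLpNorm hg h1.1) (eLpNorm_smul_le_mul_eLpNorm hg h2.1)
    _ ≤ (M + N) * eLpNorm g (ENNReal.ofReal p) volume +
          (M + N) * eLpNorm g (ENNReal.ofReal (p / (p - 1))) volume := by
        gcongr
        · exact le_self_add
        · exact le_add_self
    _ = _ := (mul_add _ _ _).symm

/-- The Cauchy–Pompeiu formula on the plane, at the origin. -/
theorem integral_dbar_div_eq {H : ℂ → ℂ} (hH : ContDiff ℝ 1 H) {C : ℝ}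
    (hC : ∀ w, ‖fderiv ℝ H w‖ ≤ C * (1 + ‖w‖ ^ 2)⁻¹) (h0 : Tendsto H (cocompact ℂ) (𝓝 0)) :
    ∫ w, dbar H w / w = -(Real.pi * H 0) := by
  set u : ℝ → ℂ := fun θ => Complex.exp (θ * I) with hu
  have hu1 : ∀ θ, ‖u θ‖ = 1 := fun θ => Complex.norm_exp_ofReal_mul_I θ
  have hu0 : ∀ θ, u θ ≠ 0 := fun θ => Complex.exp_ne_zero _
  have hucont : Continuous u := by fun_prop
  have hdiff : Differentiable ℝ H := hH.differentiable one_ne_zero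
  have hDcont : Continuous (fderiv ℝ H) := hH.continuous_fderiv one_ne_zero
  set A : ℝ × ℝ → ℂ := fun q => fderiv ℝ H (q.1 * u q.2) (u q.2) with hA
  set B : ℝ × ℝ → ℂ := fun q => fderiv ℝ H (q.1 * u q.2) (I * u q.2) with hB
  have hAc : Continuous A := by fun_prop
  have hBc : Continuous B := by fun_prop
  have hbound : ∀ (q : ℝ × ℝ) (v : ℂ), ‖v‖ = 1 →
      ‖fderiv ℝ H (q.1 * u q.2) v‖ ≤ C * (1 + q.1 ^ 2)⁻¹ := fun q v hv => by
    have := (fderiv ℝ H (q.1 * u q.2)).le_of_opNorm_le (hC _) v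
    simpa [hv, hu1] using this
  set S : Set (ℝ × ℝ) := Set.Ioi (0 : ℝ) ×ˢ Set.Ioo (-Real.pi) Real.pi with hS
  have hdom : IntegrableOn (fun q : ℝ × ℝ => C * (1 + q.1 ^ 2)⁻¹) S := by
    have h1 : Integrable (fun r : ℝ => C * (1 + r ^ 2)⁻¹) (volume.restrict (Set.Ioi 0)) :=
      (integrable_inv_one_add_sq.const_mul C).integrableOn
    have := h1.comp_fst (volume.restrict (Set.Ioo (-Real.pi) Real.pi))
    rwa [Measure.prod_restrict] at this
  have hAint : IntegrableOn A S :=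
    hdom.mono' hAc.aestronglyMeasurable (.of_forall fun q => hbound q _ (hu1 _))
  have hBint : IntegrableOn B S :=
    hdom.mono' hBc.aestronglyMeasurable (.of_forall fun q => hbound q _ (by simp [hu1]))
  have hAeq : ∫ q in S, A q = -(2 * Real.pi * H 0) := by
    have hrad : ∀ θ, ∫ r in Set.Ioi (0 : ℝ), A (r, θ) = -H 0 := fun θ => by
      have hderiv : ∀ r ∈ Set.Ici (0 : ℝ),
          HasDerivAt (fun r : ℝ => H (r * u θ)) (A (r, θ)) r := fun r _ => by
        have h := ((hasDerivAt_id r).ofReal_comp).mul_const (u θ)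
        rw [Complex.ofReal_one, one_mul] at h
        exact (hdiff (r * u θ)).hasFDerivAt.comp_hasDerivAt r h
      have hint : IntegrableOn (fun r => A (r, θ)) (Set.Ioi 0) :=
        (integrable_inv_one_add_sq.const_mul C).integrableOn.mono'
          (by fun_prop : Continuous fun r => A (r, θ)).aestronglyMeasurable
          (.of_forall fun r => hbound (r, θ) _ (hu1 _))
      have hlim : Tendsto (fun r : ℝ => H (r * u θ)) atTop (𝓝 0) := by
        refine h0.comp (tendsto_norm_atTop_iff_cobounded.1 ?_ |>.mono_right
          Metric.cobounded_eq_cocompact.le)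
        simpa [hu1] using tendsto_abs_atTop_atTop
      simpa using integral_Ioi_of_hasDerivAt_of_tendsto' hderiv hint hlim
    rw [hS, Measure.volume_eq_prod, ← setIntegral_prod_swap,
      setIntegral_prod (fun q => A q.swap) hAint.swap]
    simp only [Prod.swap_prod_mk, hrad]
    rw [setIntegral_const, Real.volume_real_Ioo_of_le (by linarith [Real.pi_pos]),
      Complex.real_smul]
    push_cast
    ring
  have hBeq : ∫ q in S, B q = 0 := by
    rw [hS, Measure.volume_eq_prod,
      setIntegral_prod _ hBint]
    refine setIntegral_eq_zero_of_forall_eq_zero fun r hr => ?_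
    have hr : (r : ℂ) ≠ 0 := by exact_mod_cast (ne_of_gt hr)
    have hderiv : ∀ θ ∈ Set.uIcc (-Real.pi) Real.pi,
        HasDerivAt (fun θ : ℝ => (r : ℂ)⁻¹ * H (r * u θ)) (B (r, θ)) θ := fun θ _ => by
      have h : HasDerivAt (fun θ : ℝ => (r : ℂ) * u θ) (r * (I * u θ)) θ := by
        have := (((hasDerivAt_id θ).ofReal_comp.mul_const I).cexp).const_mul (r : ℂ)
        convert! this using 1
        simp only [hu, id, Complex.ofReal_one]; ring
      have h2 := ((hdiff (r * u θ)).hasFDerivAt.comp_hasDerivAt θ h).const_mul (r : ℂ)⁻¹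
      convert! h2 using 1
      have hlin : ∀ (L : ℂ →L[ℝ] ℂ) (v : ℂ), L (r * v) = r * L v := fun L v => by
        rw [← Complex.real_smul, map_smul, Complex.real_smul]
      rw [hlin, inv_mul_cancel_left₀ hr]
    rw [← integral_Ioc_eq_integral_Ioo, ← intervalIntegral.integral_of_le
      (by linarith [Real.pi_pos]), intervalIntegral.integral_eq_sub_of_hasDerivAt hderiv
      ((by fun_prop : Continuous fun θ => B (r, θ)).intervalIntegrable _ _)]
    have : u (-Real.pi) = u Real.pi := by
      simp [hu, Complex.exp_neg, Complex.exp_pi_mul_I]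
    simp [this]
  calc ∫ w, dbar H w / w
      = ∫ q in S, (2 : ℂ)⁻¹ * (A q + I * B q) := by
        rw [← Complex.integral_comp_polarCoord_symm]
        refine setIntegral_congr_fun (measurableSet_Ioi.prod measurableSet_Ioo) fun q hq => ?_
        have hq : (q.1 : ℂ) ≠ 0 := by exact_mod_cast (ne_of_gt hq.1)
        have hsymm : Complex.polarCoord.symm q = q.1 * u q.2 := by
          simp [hu, Complex.exp_mul_I]
        have hbasis : ∀ (L : ℂ →L[ℝ] ℂ) (v : ℂ), L v = v.re * L 1 + v.im * L I := fun L v => by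
          conv_lhs => rw [show v = v.re • (1 : ℂ) + v.im • I by simp [Complex.re_add_im]]
          rw [map_add, map_smul, map_smul]; simp
        have hrot : ∀ L : ℂ →L[ℝ] ℂ, L 1 + I * L I = u q.2 * (L (u q.2) + I * L (I * u q.2)) := by
          intro L
          have hn : ((u q.2).re : ℂ) * (u q.2).re + (u q.2).im * (u q.2).im = 1 := by
            have := Complex.normSq_apply (u q.2)
            rw [Complex.normSq_eq_norm_sq, hu1] at this
            exact_mod_cast (by linarith : (u q.2).re * (u q.2).re + (u q.2).im * (u q.2).im = 1)
          rw [hbasis L (u q.2), hbasis L (I * u q.2)]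
          nth_rewrite 1 [← Complex.re_add_im (u q.2)]
          simp only [Complex.mul_re, Complex.mul_im, Complex.I_re, Complex.I_im]
          push_cast
          linear_combination (-(L 1 + I * L I)) * hn +
            (L 1 * (u q.2).im ^ 2 - L I * (u q.2).re * (u q.2).im) * Complex.I_sq
        simp only [hsymm, dbar, hrot, Complex.real_smul, hA, hB]
        field_simp [hu0 q.2]
    _ = -(Real.pi * H 0) := by
        rw [integral_const_mul, integral_add hAint (hBint.const_mul I), integral_const_mul,
          hAeq, hBeq]
        ring

theorem exists_schwartzMap_eq_dbar (G : 𝓢(ℂ, ℂ)) : ∃ S : 𝓢(ℂ, ℂ), ⇑S = dbar G :=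
  ⟨(2 : ℂ)⁻¹ • (SchwartzMap.evalCLM ℂ ℂ ℂ 1 (SchwartzMap.fderivCLM ℂ ℂ ℂ G) +
    I • SchwartzMap.evalCLM ℂ ℂ ℂ I (SchwartzMap.fderivCLM ℂ ℂ ℂ G)), by
    ext z; simp [dbar]; ring⟩

theorem SchwartzMap.exists_norm_le_inv_one_add_sq {F : Type*} [NormedAddCommGroup F]
    [NormedSpace ℝ F] (G : 𝓢(ℂ, F)) : ∃ C, ∀ w, ‖G w‖ ≤ C * (1 + ‖w‖ ^ 2)⁻¹ := by
  obtain ⟨C₀, -, h₀⟩ := G.decay 0 0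
  obtain ⟨C₂, -, h₂⟩ := G.decay 2 0
  refine ⟨C₀ + C₂, fun w => ?_⟩
  rw [← div_eq_mul_inv, le_div_iff₀ (by positivity)]
  have := h₀ w
  have := h₂ w
  simp only [norm_iteratedFDeriv_zero, pow_zero, one_mul] at *
  linarith

theorem norm_ek (k z : ℂ) : ‖ek k z‖ = 1 := by
  have : I * (conj k * z + k * conj z) / 2 = ((conj k * z).re : ℝ) * I := by
    have h := Complex.add_conj (conj k * z)
    rw [map_mul, Complex.conj_conj] at h
    rw [h]; push_cast; ring
  rw [ek, this, Complex.norm_exp_ofReal_mul_I]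

theorem ek_add (k z w : ℂ) : ek k (z + w) = ek k z * ek k w := by
  rw [ek, ek, ek, ← Complex.exp_add, map_add]
  congr 1; ring

theorem contDiff_ek (k : ℂ) {n : ℕ∞} : ContDiff ℝ n (ek k) := by
  have : ContDiff ℝ n (fun z : ℂ => conj z) := Complex.conjCLE.contDiff
  unfold ek
  fun_prop

theorem hasFDerivAt_ek (k z : ℂ) :
    HasFDerivAt (ek k) (ek k z • (I / 2) • (conj k • ContinuousLinearMap.id ℝ ℂ +
      k • (Complex.conjCLE : ℂ →L[ℝ] ℂ))) z := by
  have h : HasFDerivAt (fun z : ℂ => conj z) (Complex.conjCLE : ℂ →L[ℝ] ℂ) z :=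
    Complex.conjCLE.hasFDerivAt
  have h2 := ((((hasFDerivAt_id (𝕜 := ℝ) z).const_mul (conj k)).add
    (h.const_mul k)).const_mul (I / 2)).cexp
  have he : ek k = fun z => cexp (I / 2 * (conj k * z + k * conj z)) := by
    ext z; rw [ek]; congr 1; ring
  rw [he]
  exact h2

theorem norm_fderiv_ek_le (k z : ℂ) : ‖fderiv ℝ (ek k) z‖ ≤ ‖k‖ := by
  rw [(hasFDerivAt_ek k z).fderiv, norm_smul, norm_ek, one_mul]
  refine ContinuousLinearMap.opNorm_le_bound _ (norm_nonneg _) fun v => ?_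
  have : ‖conj k * v + k * conj v‖ ≤ 2 * (‖k‖ * ‖v‖) := by
    refine (norm_add_le _ _).trans (le_of_eq ?_)
    rw [norm_mul, norm_mul, Complex.norm_conj, Complex.norm_conj]; ring
  simp only [smul_apply, add_apply, smul_eq_mul, norm_mul]
  simp at this ⊢
  linarith

theorem dbar_ek_mul (k : ℂ) {G : ℂ → ℂ} {z : ℂ} (hG : DifferentiableAt ℝ G z) :
    dbar (fun w => ek k w * G w) z = I * k / 2 * (ek k z * G z) + ek k z * dbar G z := by
  have h : fderiv ℝ (fun w => ek k w * G w) z = _ :=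
    ((hasFDerivAt_ek k z).mul hG.hasFDerivAt).fderiv
  rw [dbar, h, dbar]
  simp
  linear_combination ((ek k z * conj k * G z / 4 - ek k z * k * G z / 4) * I) * Complex.I_sq

theorem dbar_comp_add_right (G : ℂ → ℂ) (a z : ℂ) :
    dbar (fun w => G (w + a)) z = dbar G (z + a) := by
  simp only [dbar, fderiv_comp_add_right]

theorem dbarInv_ek_mul (k : ℂ) (G : ℂ → ℂ) (z : ℂ) :
    dbarInv (fun w => ek k w * G w) z =
      -((Real.pi : ℂ)⁻¹ * ek k z * ∫ w, ek k w * G (w + z) / w) := by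
  have hshift : ∫ w : ℂ, ek k w * G w / (z - w) =
      ∫ w : ℂ, -(ek k z * (ek k w * G (w + z) / w)) := by
    rw [← integral_add_right_eq_self _ z]
    refine integral_congr_ae (.of_forall fun w => ?_)
    simp only
    rw [ek_add, show z - (w + z) = -w by ring, div_neg]
    ring
  rw [dbarInv, hshift, integral_neg, integral_const_mul]
  ring

theorem integral_ek_mul_div (k : ℂ) (G : 𝓢(ℂ, ℂ))
    (hint : ∀ S : 𝓢(ℂ, ℂ), Integrable fun w => ek k w * S w / w) :
    I * k / 2 * ∫ w, ek k w * G w / w =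
      -(Real.pi * G 0) - ∫ w, ek k w * dbar G w / w := by
  obtain ⟨S, hS⟩ := exists_schwartzMap_eq_dbar G
  obtain ⟨C₀, h₀⟩ := G.exists_norm_le_inv_one_add_sq
  obtain ⟨C₁, h₁⟩ := (SchwartzMap.fderivCLM ℝ ℂ ℂ G).exists_norm_le_inv_one_add_sq
  have hsmooth : ContDiff ℝ 1 fun w => ek k w * G w := (contDiff_ek k (n := 1)).mul (G.smooth 1)
  have hbound : ∀ w, ‖fderiv ℝ (fun w => ek k w * G w) w‖ ≤
      (C₁ + ‖k‖ * C₀) * (1 + ‖w‖ ^ 2)⁻¹ := fun w => by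
    rw [fderiv_fun_mul (hasFDerivAt_ek k w).differentiableAt G.differentiableAt]
    refine (norm_add_le _ _).trans ?_
    rw [norm_smul, norm_smul, norm_ek, one_mul, add_mul]
    refine add_le_add (h₁ w) ?_
    calc ‖G w‖ * ‖fderiv ℝ (ek k) w‖ ≤ (C₀ * (1 + ‖w‖ ^ 2)⁻¹) * ‖k‖ :=
          mul_le_mul (h₀ w) (norm_fderiv_ek_le k w) (norm_nonneg _) ((norm_nonneg _).trans (h₀ w))
      _ = _ := by ring
  have hlim : Tendsto (fun w => ek k w * G w) (cocompact ℂ) (𝓝 0) := by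
    rw [tendsto_zero_iff_norm_tendsto_zero]
    simpa [norm_ek] using (tendsto_zero_iff_norm_tendsto_zero.1 (zero_at_infty G))
  have h := integral_dbar_div_eq hsmooth hbound hlim
  have hsplit : ∀ w, dbar (fun w => ek k w * G w) w / w =
      I * k / 2 * (ek k w * G w / w) + ek k w * S w / w := fun w => by
    rw [dbar_ek_mul k G.differentiableAt, hS]; ring
  simp_rw [hsplit] at h
  rw [integral_add ((hint G).const_mul _) (hint S), integral_const_mul] at h
  rw [← hS]
  have : ek k 0 = 1 := by simp [ek]
  rw [this] at h
  linear_combination h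

theorem norm_dbarInv_ek_mul_le {k : ℂ} (hk : k ≠ 0) (G : 𝓢(ℂ, ℂ)) (z : ℂ)
    (hint : ∀ S : 𝓢(ℂ, ℂ), Integrable fun w => ek k w * S w / w) :
    ‖dbarInv (fun w => ek k w * G w) z‖ ≤
      2 * ‖k‖⁻¹ * (‖G z‖ + ‖∫ w, ek k w * dbar G (w + z) / w‖) := by
  set G' : 𝓢(ℂ, ℂ) := G.compSubConstCLM ℂ (-z) with hG'
  have hG'apply : ∀ w, G' w = G (w + z) := fun w => by simp [hG']
  have hdbar : ∀ w, dbar G' w = dbar G (w + z) := fun w => by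
    rw [← dbar_comp_add_right]; congr 1; ext w; exact hG'apply w
  have hid := integral_ek_mul_div k G' hint
  simp only [hG'apply, hdbar, zero_add] at hid
  set J := ∫ w, ek k w * dbar G (w + z) / w
  set T := ∫ w, ek k w * G (w + z) / w
  have hT : T = 2 * (I * k)⁻¹ * (-(Real.pi * G z) - J) := by
    rw [← hid]
    field_simp [Complex.I_ne_zero]
  have hpi : ‖(Real.pi : ℂ)‖ = Real.pi := by simp [Real.pi_pos.le]
  have hJ : ‖-(Real.pi * G z) - J‖ ≤ Real.pi * (‖G z‖ + ‖J‖) := by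
    refine (norm_sub_le _ _).trans ?_
    rw [norm_neg, norm_mul, hpi, mul_add]
    gcongr
    exact le_mul_of_one_le_left (norm_nonneg _) (by linarith [Real.pi_gt_three])
  rw [dbarInv_ek_mul, norm_neg, norm_mul, norm_mul, norm_ek, norm_inv, hpi, mul_one]
  change _ * ‖T‖ ≤ _
  rw [hT, norm_mul, norm_mul, norm_inv, norm_mul, Complex.norm_I, one_mul, Complex.norm_ofNat]
  calc Real.pi⁻¹ * (2 * ‖k‖⁻¹ * ‖-(Real.pi * G z) - J‖)
      ≤ Real.pi⁻¹ * (2 * ‖k‖⁻¹ * (Real.pi * (‖G z‖ + ‖J‖))) := by gcongr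
    _ = _ := by field_simp

/-- Estimate \eqref{fr}:
`‖∂̄⁻¹[e_{-k}G]‖_∞ ≤ C|k|⁻¹(‖∂̄G‖_p + ‖∂̄G‖_{p'} + ‖G‖_∞)`. -/
theorem stmt6 (p : ℝ) (hp : 2 < p) :
    ∃ C : ℝ, 0 < C ∧ ∀ (G : 𝓢(ℂ, ℂ)) (k : ℂ), k ≠ 0 →
      eLpNorm (dbarInv fun z => ek (-k) z * G z) ⊤ volume ≤
        ENNReal.ofReal (C * ‖k‖⁻¹) *
          (eLpNorm (dbar (⇑G)) (ENNReal.ofReal p) volume +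
            eLpNorm (dbar (⇑G)) (ENNReal.ofReal (p / (p - 1))) volume +
            eLpNorm (⇑G) ⊤ volume) := by
  obtain ⟨K, hK, hker⟩ := exists_eLpNorm_one_inv_mul_le hp
  have hint : ∀ (k : ℂ) (S : 𝓢(ℂ, ℂ)), Integrable fun w => ek k w * S w / w := fun k S => by
    have hmeas : AEStronglyMeasurable (fun w => w⁻¹ * S w) volume :=
      measurable_inv.aestronglyMeasurable.mul S.continuous.aestronglyMeasurable
    have hfin : MemLp (fun w => w⁻¹ * S w) 1 volume :=
      ⟨hmeas, (hker S S.continuous.aestronglyMeasurable).trans_lt <| ENNReal.mul_lt_top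
        ENNReal.ofReal_lt_top (ENNReal.add_lt_top.2 ⟨(S.memLp _ _).2, (S.memLp _ _).2⟩)⟩
    have := (memLp_one_iff_integrable.1 hfin).bdd_mul (c := 1)
      (contDiff_ek k (n := 1)).continuous.aestronglyMeasurable
      (.of_forall fun w => (norm_ek k w).le)
    refine this.congr (.of_forall fun w => ?_)
    simp only
    ring
  refine ⟨2 * (K + 1), by positivity, fun G k hk => ?_⟩
  set P := eLpNorm (dbar (⇑G)) (ENNReal.ofReal p) volume
  set Q := eLpNorm (dbar (⇑G)) (ENNReal.ofReal (p / (p - 1))) volume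
  obtain ⟨S, hS⟩ := exists_schwartzMap_eq_dbar G
  have hSmeas : AEStronglyMeasurable (dbar G) volume := hS ▸ S.continuous.aestronglyMeasurable
  rw [eLpNorm_exponent_top, eLpNorm_exponent_top]
  refine eLpNormEssSup_le_of_ae_enorm_bound ?_
  filter_upwards [ae_le_eLpNormEssSup (f := ⇑G) (μ := volume)] with z hz
  have hbound : ‖∫ w, ek (-k) w * dbar G (w + z) / w‖ₑ ≤ ENNReal.ofReal K * (P + Q) := by
    have htrans : ∀ q, eLpNorm (fun w => dbar G (w + z)) q volume = eLpNorm (dbar G) q volume :=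
      fun q => eLpNorm_comp_measurePreserving (g := dbar G) (f := (· + z)) hSmeas
        (measurePreserving_add_right volume z)
    have hmeas : AEStronglyMeasurable (fun w => dbar G (w + z)) volume :=
      hSmeas.comp_measurePreserving (measurePreserving_add_right volume z)
    refine (enorm_integral_le_lintegral_enorm _).trans ?_
    have := hker _ hmeas
    rw [htrans, htrans, eLpNorm_one_eq_lintegral_enorm] at this
    refine le_trans (le_of_eq (lintegral_congr fun w => ?_)) this
    simp [← ofReal_norm, norm_ek, div_eq_inv_mul]
  have hreal := norm_dbarInv_ek_mul_le (neg_ne_zero.2 hk) G z (hint (-k))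
  rw [norm_neg] at hreal
  set N := eLpNormEssSup (⇑G) volume
  set J := ∫ w, ek (-k) w * dbar G (w + z) / w
  rw [← ofReal_norm]
  calc ENNReal.ofReal ‖dbarInv (fun z => ek (-k) z * G z) z‖
      ≤ ENNReal.ofReal (2 * ‖k‖⁻¹ * (‖G z‖ + ‖J‖)) := ENNReal.ofReal_le_ofReal hreal
    _ = ENNReal.ofReal (2 * ‖k‖⁻¹) * (‖G z‖ₑ + ‖J‖ₑ) := by
        rw [ENNReal.ofReal_mul (by positivity), ENNReal.ofReal_add (norm_nonneg _) (norm_nonneg _),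
          ofReal_norm, ofReal_norm]
    _ ≤ ENNReal.ofReal (2 * ‖k‖⁻¹) * (N + ENNReal.ofReal K * (P + Q)) := by gcongr
    _ ≤ ENNReal.ofReal (2 * ‖k‖⁻¹) *
          (ENNReal.ofReal K * N + N + (ENNReal.ofReal K + 1) * (P + Q)) := by
        gcongr
        · exact le_add_self
        · exact le_self_add
    _ = ENNReal.ofReal (2 * (K + 1) * ‖k‖⁻¹) * (P + Q + N) := by
        rw [show 2 * (K + 1) * ‖k‖⁻¹ = 2 * ‖k‖⁻¹ * (K + 1) by ring,
          ENNReal.ofReal_mul (p := 2 * ‖k‖⁻¹) (by positivity), ENNReal.ofReal_add hK zero_le_one,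
          ENNReal.ofReal_one]
        ring
end

section
/- Let q : ℂ → ℂ be a Schwartz function. Then for every k ∈ ℂ there exists a unique pair (u₁, u₂) of bounded continuous functions ℂ → ℂ satisfying the integral equations u₁ = 1 + ∂̄⁻¹[ e_{−k} · q · conj(u₂) ] and u₂ = ∂̄⁻¹[ e_{−k} · q · conj(u₁) ] pointwise on ℂ; moreover u₁(z) → 1 and u₂(z) → 0 as |z| → ∞. -/
open MeasureTheory Complex ComplexConjugate Filter Bornology
open scoped ENNReal Topology SchwartzMap

/-- `(u₁, u₂)` is a (bounded continuous) solution of the integral equations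
`u₁ = 1 + ∂̄⁻¹[e_{-k} q conj u₂]`, `u₂ = ∂̄⁻¹[e_{-k} q conj u₁]`. -/
def IsScattering (q : ℂ → ℂ) (k : ℂ) (u₁ u₂ : ℂ → ℂ) : Prop :=
  Continuous u₁ ∧ IsBounded (Set.range u₁) ∧ Continuous u₂ ∧ IsBounded (Set.range u₂) ∧
  (∀ z : ℂ, u₁ z = 1 + dbarInv (fun w => ek (-k) w * q w * conj (u₂ w)) z) ∧
  (∀ z : ℂ, u₂ z = dbarInv (fun w => ek (-k) w * q w * conj (u₁ w)) z)

/-- Bounded, measurable and integrable functions: for these the solid Cauchy transform converges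
absolutely at every point. -/
structure IsCauchyDensity (f : ℂ → ℂ) : Prop where
  measurable : Measurable f
  integrable : Integrable f
  bounded : ∃ A, ∀ w, ‖f w‖ ≤ A

/-- The radial weight `‖t‖ ^ (-3/2)`. -/
noncomputable def rieszWeight (t : ℂ) : ℝ := (√‖t‖)⁻¹ ^ 3

theorem rieszWeight_nonneg (t : ℂ) : 0 ≤ rieszWeight t := by
  unfold rieszWeight; positivity

theorem measurable_rieszWeight : Measurable rieszWeight := by
  unfold rieszWeight; fun_prop

theorem integrableOn_ball_rieszWeight : IntegrableOn rieszWeight (Metric.ball 0 1) := by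
  refine integrableOn_ball_of_norm_le_rpow (C := 1) (α := 3 / 2) (by simp)
    (by rw [Complex.finrank_real_complex]; norm_num) (ae_of_all _ fun t => ?_)
    measurable_rieszWeight.aestronglyMeasurable
  rw [Real.norm_of_nonneg (rieszWeight_nonneg t), rieszWeight, one_mul,
    Real.rpow_neg (norm_nonneg t), inv_pow, Real.sqrt_eq_rpow, ← Real.rpow_natCast,
    ← Real.rpow_mul (norm_nonneg t)]
  norm_num

theorem rieszWeight_le_one {t : ℂ} (ht : t ∉ Metric.ball (0 : ℂ) 1) : rieszWeight t ≤ 1 := by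
  have h : 1 ≤ √‖t‖ := by simpa using ht
  exact pow_le_one₀ (by positivity) (inv_le_one_of_one_le₀ h)

theorem inv_norm_le_one_add_rieszWeight (t : ℂ) : ‖t‖⁻¹ ≤ 1 + rieszWeight t := by
  have h : ‖t‖⁻¹ = (√‖t‖)⁻¹ ^ 2 := by rw [inv_pow, Real.sq_sqrt (norm_nonneg t)]
  have h0 : 0 ≤ (√‖t‖)⁻¹ := by positivity
  rw [h, rieszWeight]
  nlinarith [mul_nonneg (sq_nonneg ((√‖t‖)⁻¹ - 1)) h0]

theorem norm_inv_sub_inv_le {s t : ℂ} (hs : s ≠ 0) (ht : t ≠ 0) :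
    ‖s⁻¹ - t⁻¹‖ ≤ √‖s - t‖ * (rieszWeight s + rieszWeight t) := by
  have hs' : 0 < ‖s‖ := norm_pos_iff.2 hs
  have ht' : 0 < ‖t‖ := norm_pos_iff.2 ht
  set x := √‖s‖ with hx
  set y := √‖t‖ with hy
  set d := √‖s - t‖ with hd
  have hx0 : 0 < x := Real.sqrt_pos.2 hs'
  have hy0 : 0 < y := Real.sqrt_pos.2 ht'
  have hd0 : 0 ≤ d := Real.sqrt_nonneg _
  have hx2 : ‖s‖ = x ^ 2 := (Real.sq_sqrt hs'.le).symm
  have hy2 : ‖t‖ = y ^ 2 := (Real.sq_sqrt ht'.le).symm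
  have hd2 : ‖s - t‖ = d ^ 2 := (Real.sq_sqrt (norm_nonneg _)).symm
  have hdxy : d ≤ x + y := by
    refine abs_le_of_sq_le_sq' ?_ (by positivity) |>.2
    nlinarith [norm_sub_le s t, mul_pos hx0 hy0]
  have key : ‖s⁻¹ - t⁻¹‖ = d * (d * (x⁻¹ ^ 2 * y⁻¹ ^ 2)) := by
    rw [inv_sub_inv hs ht, norm_div, norm_mul, hx2, hy2, norm_sub_rev, hd2]
    field_simp
  rw [key, rieszWeight, rieszWeight, ← hx, ← hy]
  refine mul_le_mul_of_nonneg_left ?_ hd0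
  have hX : 0 < x⁻¹ := inv_pos.2 hx0
  have hY : 0 < y⁻¹ := inv_pos.2 hy0
  calc d * (x⁻¹ ^ 2 * y⁻¹ ^ 2) ≤ (x + y) * (x⁻¹ ^ 2 * y⁻¹ ^ 2) := by gcongr
    _ = x⁻¹ * y⁻¹ ^ 2 + x⁻¹ ^ 2 * y⁻¹ := by field_simp
    _ ≤ x⁻¹ ^ 3 + y⁻¹ ^ 3 := by
      nlinarith [mul_nonneg (sq_nonneg (x⁻¹ - y⁻¹)) (add_pos hX hY).le]

namespace IsCauchyDensity

variable {f g : ℂ → ℂ}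

theorem mul_bounded (hf : IsCauchyDensity f) (hg : Measurable g) {c : ℝ} (hc : ∀ w, ‖g w‖ ≤ c) :
    IsCauchyDensity fun w => f w * g w where
  measurable := hf.measurable.mul hg
  integrable := hf.integrable.mul_bdd (c := c) hg.aestronglyMeasurable (ae_of_all _ hc)
  bounded := by
    obtain ⟨A, hA⟩ := hf.bounded
    refine ⟨A * c, fun w => ?_⟩
    rw [norm_mul]
    exact mul_le_mul (hA w) (hc w) (norm_nonneg _) ((norm_nonneg _).trans (hA w))

theorem neg (hf : IsCauchyDensity f) : IsCauchyDensity fun w => -f w where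
  measurable := hf.measurable.neg
  integrable := hf.integrable.neg
  bounded := by simpa using hf.bounded

theorem rieszPotential (hf : IsCauchyDensity f) :
    ∃ M, ∀ z, Integrable (fun w => ‖f w‖ * rieszWeight (z - w)) ∧
      ∫ w, ‖f w‖ * rieszWeight (z - w) ≤ M := by
  obtain ⟨A, hA⟩ := hf.bounded
  have hA0 : 0 ≤ A := (norm_nonneg _).trans (hA 0)
  set κ := (Metric.ball (0 : ℂ) 1).indicator rieszWeight with hκ
  have hκi : Integrable κ := integrableOn_ball_rieszWeight.integrable_indicator measurableSet_ball
  have hle : ∀ z w, ‖f w‖ * rieszWeight (z - w) ≤ ‖f w‖ + A * κ (z - w) := by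
    intro z w
    by_cases h : z - w ∈ Metric.ball (0 : ℂ) 1
    · rw [hκ, Set.indicator_of_mem h]
      nlinarith [hA w, rieszWeight_nonneg (z - w), norm_nonneg (f w)]
    · rw [hκ, Set.indicator_of_notMem h]
      nlinarith [rieszWeight_le_one h, norm_nonneg (f w)]
  have hdom : ∀ z, Integrable fun w => ‖f w‖ + A * κ (z - w) := fun z =>
    hf.integrable.norm.add ((hκi.comp_sub_left z).const_mul A)
  have hint : ∀ z, Integrable fun w => ‖f w‖ * rieszWeight (z - w) := fun z => by
    refine (hdom z).mono' ?_ (ae_of_all _ fun w => ?_)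
    · exact (hf.measurable.norm.mul (measurable_rieszWeight.comp
        (measurable_const.sub measurable_id))).aestronglyMeasurable
    · rw [Real.norm_of_nonneg (mul_nonneg (norm_nonneg _) (rieszWeight_nonneg _))]
      exact hle z w
  refine ⟨(∫ w, ‖f w‖) + A * ∫ w, κ w, fun z => ⟨hint z, ?_⟩⟩
  refine (integral_mono (hint z) (hdom z) (hle z)).trans_eq ?_
  rw [integral_add hf.integrable.norm ((hκi.comp_sub_left z).const_mul A), integral_const_mul,
    integral_sub_left_eq_self κ volume z]

theorem measurable_kernel (hf : IsCauchyDensity f) (z : ℂ) : Measurable fun w => f w / (z - w) :=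
  hf.measurable.div (measurable_const.sub measurable_id)

theorem kernel_bound (hf : IsCauchyDensity f) :
    ∃ M, ∀ z, Integrable (fun w => f w / (z - w)) ∧ ∫ w, ‖f w / (z - w)‖ ≤ M := by
  obtain ⟨M, hM⟩ := hf.rieszPotential
  have hle : ∀ z w, ‖f w / (z - w)‖ ≤ ‖f w‖ + ‖f w‖ * rieszWeight (z - w) := fun z w => by
    rw [norm_div, div_eq_mul_inv]
    nlinarith [inv_norm_le_one_add_rieszWeight (z - w), norm_nonneg (f w)]
  have hdom : ∀ z, Integrable fun w => ‖f w‖ + ‖f w‖ * rieszWeight (z - w) := fun z =>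
    hf.integrable.norm.add (hM z).1
  have hint : ∀ z, Integrable fun w => f w / (z - w) := fun z =>
    (hdom z).mono' (hf.measurable_kernel z).aestronglyMeasurable (ae_of_all _ (hle z))
  refine ⟨(∫ w, ‖f w‖) + M, fun z => ⟨hint z, ?_⟩⟩
  refine (integral_mono (hint z).norm (hdom z) (hle z)).trans ?_
  rw [integral_add hf.integrable.norm (hM z).1]
  linarith [(hM z).2]

theorem integrable_kernel (hf : IsCauchyDensity f) (z : ℂ) :
    Integrable fun w => f w / (z - w) :=
  (hf.kernel_bound.choose_spec z).1

theorem kernel_holder (hf : IsCauchyDensity f) :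
    ∃ M, ∀ z z₀, ∫ w, ‖f w / (z - w) - f w / (z₀ - w)‖ ≤ M * √‖z - z₀‖ := by
  obtain ⟨M, hM⟩ := hf.rieszPotential
  refine ⟨M + M, fun z z₀ => ?_⟩
  have hle : ∀ᵐ w, ‖f w / (z - w) - f w / (z₀ - w)‖ ≤
      √‖z - z₀‖ * (‖f w‖ * rieszWeight (z - w) + ‖f w‖ * rieszWeight (z₀ - w)) := by
    filter_upwards [Measure.ae_ne volume z, Measure.ae_ne volume z₀] with w hz hz₀
    have h := norm_inv_sub_inv_le (sub_ne_zero.2 hz.symm) (sub_ne_zero.2 hz₀.symm)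
    rw [sub_sub_sub_cancel_right] at h
    rw [div_eq_mul_inv, div_eq_mul_inv, ← mul_sub, norm_mul]
    nlinarith [norm_nonneg (f w)]
  have hdom := ((hM z).1.add (hM z₀).1).const_mul √‖z - z₀‖
  refine (integral_mono_ae ((hf.integrable_kernel z).sub (hf.integrable_kernel z₀)).norm
    hdom hle).trans ?_
  simp only [Pi.add_apply]
  rw [integral_const_mul, integral_add (hM z).1 (hM z₀).1, mul_comm]
  gcongr
  exacts [(hM z).2, (hM z₀).2]

theorem kernel_decay (hf : IsCauchyDensity f) (hf' : IsCauchyDensity fun w => w * f w) :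
    ∃ M, ∀ z, ‖z‖ * ∫ w, ‖f w / (z - w)‖ ≤ M := by
  obtain ⟨M, hM⟩ := hf'.kernel_bound
  refine ⟨(∫ w, ‖f w‖) + M, fun z => ?_⟩
  rw [← integral_const_mul]
  have hle : ∀ᵐ w, ‖z‖ * ‖f w / (z - w)‖ ≤ ‖f w‖ + ‖w * f w / (z - w)‖ := by
    filter_upwards [Measure.ae_ne volume z] with w hw
    have h : z - w ≠ 0 := sub_ne_zero.2 hw.symm
    rw [← norm_mul, show z * (f w / (z - w)) = f w + w * f w / (z - w) by field_simp; ring]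
    exact norm_add_le _ _
  refine (integral_mono_ae ((hf.integrable_kernel z).norm.const_mul _)
    (hf.integrable.norm.add (hM z).1.norm) hle).trans ?_
  simp only [Pi.add_apply]
  rw [integral_add hf.integrable.norm (hM z).1.norm]
  linarith [(hM z).2]

end IsCauchyDensity

theorem dbarInv_const_mul (c : ℂ) (f : ℂ → ℂ) (z : ℂ) :
    dbarInv (fun w => c * f w) z = c * dbarInv f z := by
  simp only [dbarInv, mul_div_assoc, integral_const_mul]
  ring

theorem dbarInv_add {f g : ℂ → ℂ} (hf : IsCauchyDensity f) (hg : IsCauchyDensity g) (z : ℂ) :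
    dbarInv (fun w => f w + g w) z = dbarInv f z + dbarInv g z := by
  simp only [dbarInv, add_div]
  rw [integral_add (hf.integrable_kernel z) (hg.integrable_kernel z), mul_add]

theorem norm_inv_pi_le_one : ‖(Real.pi : ℂ)⁻¹‖ ≤ 1 := by
  rw [norm_inv, Complex.norm_real, Real.norm_of_nonneg Real.pi_pos.le]
  exact inv_le_one_of_one_le₀ (by linarith [Real.pi_gt_three])

theorem norm_dbarInv_le (h : ℂ → ℂ) (z : ℂ) : ‖dbarInv h z‖ ≤ ‖∫ w, h w / (z - w)‖ := by
  rw [dbarInv, norm_mul]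
  exact mul_le_of_le_one_left (norm_nonneg _) norm_inv_pi_le_one

namespace IsCauchyDensity

variable {f g : ℂ → ℂ}

theorem norm_dbarInv_mul_le (hf : IsCauchyDensity f) {c : ℝ} (hc : ∀ w, ‖g w‖ ≤ c) (z : ℂ) :
    ‖dbarInv (fun w => f w * g w) z‖ ≤ c * ∫ w, ‖f w / (z - w)‖ := by
  refine (norm_dbarInv_le _ _).trans ?_
  rw [← integral_const_mul]
  refine norm_integral_le_of_norm_le ((hf.integrable_kernel z).norm.const_mul c)
    (ae_of_all _ fun w => ?_)
  rw [mul_div_right_comm, norm_mul, mul_comm]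
  gcongr
  exact hc w

theorem norm_dbarInv_mul_sub_le (hf : IsCauchyDensity f) (hg : Measurable g) {c : ℝ}
    (hc : ∀ w, ‖g w‖ ≤ c) (z z₀ : ℂ) :
    ‖dbarInv (fun w => f w * g w) z - dbarInv (fun w => f w * g w) z₀‖ ≤
      c * ∫ w, ‖f w / (z - w) - f w / (z₀ - w)‖ := by
  have hfg := hf.mul_bounded hg hc
  rw [dbarInv, dbarInv, ← mul_sub, norm_mul,
    ← integral_sub (hfg.integrable_kernel z) (hfg.integrable_kernel z₀), ← integral_const_mul]
  refine (mul_le_of_le_one_left (norm_nonneg _) norm_inv_pi_le_one).trans ?_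
  refine norm_integral_le_of_norm_le
    (((hf.integrable_kernel z).sub (hf.integrable_kernel z₀)).norm.const_mul c)
    (ae_of_all _ fun w => ?_)
  rw [mul_div_right_comm, mul_div_right_comm, ← sub_mul, norm_mul, mul_comm]
  gcongr
  exact hc w

theorem dbarInv_bounded (hf : IsCauchyDensity f) : ∃ M, ∀ z, ‖dbarInv f z‖ ≤ M := by
  obtain ⟨M, hM⟩ := hf.kernel_bound
  exact ⟨M, fun z => (norm_dbarInv_le _ _).trans ((norm_integral_le_integral_norm _).trans (hM z).2)⟩

theorem continuous_dbarInv (hf : IsCauchyDensity f) : Continuous (dbarInv f) := by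
  obtain ⟨M, hM⟩ := hf.kernel_holder
  refine continuous_iff_continuousAt.2 fun z₀ => ?_
  refine tendsto_iff_norm_sub_tendsto_zero.2 (squeeze_zero (fun _ => norm_nonneg _)
    (g := fun z => M * √‖z - z₀‖) (fun z => ?_) ?_)
  · have h := hf.norm_dbarInv_mul_sub_le (g := fun _ => 1) measurable_const (c := 1) (by simp) z z₀
    simp only [mul_one, one_mul] at h
    exact h.trans (hM z z₀)
  · have h : Continuous fun z : ℂ => M * √‖z - z₀‖ := by fun_prop
    simpa using h.tendsto z₀

theorem mul_dbarInv (hf : IsCauchyDensity f) (hg : IsCauchyDensity g) :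
    IsCauchyDensity fun w => f w * dbarInv g w :=
  hf.mul_bounded hg.continuous_dbarInv.measurable hg.dbarInv_bounded.choose_spec

theorem integrable_prod_kernel (hf : IsCauchyDensity f) (hg : IsCauchyDensity g) (z : ℂ) :
    Integrable (fun p : ℂ × ℂ => g p.2 / (z - p.2) * (f p.1 / (p.2 - p.1)))
      (volume.prod volume) := by
  obtain ⟨M, hM⟩ := hf.kernel_bound
  have hm : Measurable fun p : ℂ × ℂ => g p.2 / (z - p.2) * (f p.1 / (p.2 - p.1)) :=
    ((hg.measurable_kernel z).comp measurable_snd).mul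
      ((hf.measurable.comp measurable_fst).div (measurable_snd.sub measurable_fst))
  rw [integrable_prod_iff' hm.aestronglyMeasurable]
  refine ⟨ae_of_all _ fun v => (hM v).1.const_mul (g v / (z - v)), ?_⟩
  refine ((hg.integrable_kernel z).norm.mul_const M).mono'
    hm.aestronglyMeasurable.norm.prod_swap.integral_prod_right' (ae_of_all _ fun v => ?_)
  rw [Real.norm_of_nonneg (integral_nonneg fun _ => norm_nonneg _)]
  simp only [norm_mul]
  rw [integral_const_mul]
  exact mul_le_mul_of_nonneg_left (hM v).2 (norm_nonneg _)

/-- The Rota–Baxter identity for the solid Cauchy transform. -/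
theorem dbarInv_mul_dbarInv (hf : IsCauchyDensity f) (hg : IsCauchyDensity g) (z : ℂ) :
    dbarInv f z * dbarInv g z =
      dbarInv (fun w => f w * dbarInv g w) z + dbarInv (fun w => g w * dbarInv f w) z := by
  have hswap := integral_integral_swap (f := fun w v => g v / (z - v) * (f w / (v - w)))
    (hf.integrable_prod_kernel hg z)
  have hpt : ∀ᵐ w, f w / (z - w) * (∫ v, g v / (z - v)) =
      f w / (z - w) * (∫ v, g v / (w - v)) + ∫ v, g v / (z - v) * (f w / (v - w)) := by
    filter_upwards [Measure.ae_ne volume z] with w hw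
    have hi := (hg.integrable_kernel z).const_mul (f w / (z - w))
    have hi' := (hg.integrable_kernel w).const_mul (f w / (z - w))
    rw [← integral_const_mul, ← integral_const_mul, ← sub_eq_iff_eq_add', ← integral_sub hi hi']
    refine integral_congr_ae ?_
    filter_upwards [Measure.ae_ne volume z, Measure.ae_ne volume w] with v hv hvw
    have h1 : z - w ≠ 0 := sub_ne_zero.2 hw.symm
    have h2 : z - v ≠ 0 := sub_ne_zero.2 hv.symm
    have h3 : w - v ≠ 0 := sub_ne_zero.2 hvw.symm
    have h4 : v - w ≠ 0 := sub_ne_zero.2 hvw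
    field_simp
    ring
  have hint1 : Integrable fun w => f w / (z - w) * ∫ v, g v / (w - v) := by
    have h := ((hf.mul_dbarInv hg).integrable_kernel z).const_mul (Real.pi : ℂ)
    refine h.congr (ae_of_all _ fun w => ?_)
    have : (Real.pi : ℂ) ≠ 0 := by exact_mod_cast Real.pi_ne_zero
    simp only [dbarInv]
    field_simp
  have hint2 : Integrable fun w => ∫ v, g v / (z - v) * (f w / (v - w)) :=
    (hf.integrable_prod_kernel hg z).integral_prod_left
  have key : (∫ w, f w / (z - w)) * (∫ v, g v / (z - v)) =
      (∫ w, f w / (z - w) * ∫ v, g v / (w - v)) + ∫ v, g v / (z - v) * ∫ w, f w / (v - w) := by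
    rw [← integral_mul_const, integral_congr_ae hpt, integral_add hint1 hint2, hswap]
    simp only [integral_const_mul]
  have hpull : ∀ F G : ℂ → ℂ, ∫ w, F w * ((Real.pi : ℂ)⁻¹ * G w) / (z - w) =
      (Real.pi : ℂ)⁻¹ * ∫ w, F w / (z - w) * G w := fun F G => by
    rw [← integral_const_mul]
    congr 1 with w
    ring
  simp only [dbarInv]
  rw [hpull f, hpull g]
  linear_combination (Real.pi : ℂ)⁻¹ ^ 2 * key

theorem mul_dbarInv_pow (hf : IsCauchyDensity f) (hg : IsCauchyDensity g) (n : ℕ) :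
    IsCauchyDensity fun w => f w * dbarInv g w ^ n := by
  obtain ⟨R, hR⟩ := hg.dbarInv_bounded
  refine hf.mul_bounded (hg.continuous_dbarInv.measurable.pow_const n) (c := R ^ n) fun w => ?_
  rw [norm_pow]
  exact pow_le_pow_left₀ (norm_nonneg _) (hR w) n

theorem dbarInv_mul_dbarInv_pow (hf : IsCauchyDensity f) (n : ℕ) (z : ℂ) :
    (n + 1) * dbarInv (fun w => f w * dbarInv f w ^ n) z = dbarInv f z ^ (n + 1) := by
  induction n generalizing z with
  | zero => simp
  | succ n ih =>
    have h := hf.dbarInv_mul_dbarInv (hf.mul_dbarInv_pow hf n) z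
    have hn : (n + 1 : ℂ) ≠ 0 := by exact_mod_cast n.succ_ne_zero
    have e1 : (fun w => f w * dbarInv (fun v => f v * dbarInv f v ^ n) w) =
        fun w => (n + 1 : ℂ)⁻¹ * (f w * dbarInv f w ^ (n + 1)) := by
      ext w
      rw [← ih w]
      field_simp
    have e2 : (fun w => f w * dbarInv f w ^ n * dbarInv f w) =
        fun w => f w * dbarInv f w ^ (n + 1) := by
      ext w; ring
    rw [e1, e2, dbarInv_const_mul] at h
    have ihz := ih z
    push_cast
    field_simp at h
    linear_combination -h + dbarInv f z * ihz

/-- A bounded solution of `w = ∂̄⁻¹[f w]` vanishes identically. -/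
theorem eq_zero_of_eq_dbarInv_mul (hf : IsCauchyDensity f) {w : ℂ → ℂ} (hw : Measurable w)
    {c : ℝ} (hc : ∀ z, ‖w z‖ ≤ c) (h : ∀ z, w z = dbarInv (fun v => f v * w v) z) (z : ℂ) :
    w z = 0 := by
  have hfw := hf.mul_bounded hw hc
  have hw' : dbarInv (fun v => f v * w v) = w := funext fun z => (h z).symm
  set s := dbarInv f with hs
  set Q : ℕ → ℂ := fun n => dbarInv (fun v => f v * w v * s v ^ n) z with hQ
  have hrec : ∀ n : ℕ, w z * s z ^ (n + 1) = Q (n + 1) + (n + 1) * Q n := by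
    intro n
    have hn : (n + 1 : ℂ) ≠ 0 := by exact_mod_cast n.succ_ne_zero
    have hRB := hfw.dbarInv_mul_dbarInv (hf.mul_dbarInv_pow hf n) z
    have e1 : (fun v => f v * w v * dbarInv (fun y => f y * dbarInv f y ^ n) v) =
        fun v => (n + 1 : ℂ)⁻¹ * (f v * w v * s v ^ (n + 1)) := by
      ext v
      rw [hs, ← hf.dbarInv_mul_dbarInv_pow n v]
      field_simp
    have e2 : (fun v => f v * dbarInv f v ^ n * w v) = fun v => f v * w v * s v ^ n := by
      ext v; rw [hs]; ring
    rw [hw', e1, e2, dbarInv_const_mul] at hRB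
    have hp := hf.dbarInv_mul_dbarInv_pow n z
    change _ = _ * Q (n + 1) + Q n at hRB
    field_simp at hRB
    rw [← hs] at hp
    rw [← hp]
    linear_combination hRB
  have hsum : ∀ N : ℕ, w z * ∑ n ∈ Finset.range (N + 1), (-s z) ^ n / (n.factorial : ℂ) =
      (-1) ^ N * (Q N / (N.factorial : ℂ)) := by
    intro N
    induction N with
    | zero => simpa [hQ] using h z
    | succ N ih =>
      have hN : (N.factorial : ℂ) ≠ 0 := by exact_mod_cast N.factorial_ne_zero
      have hN1 : (N + 1 : ℂ) ≠ 0 := by exact_mod_cast N.succ_ne_zero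
      rw [Finset.sum_range_succ, mul_add, ih, Nat.factorial_succ, neg_pow (s z)]
      push_cast
      field_simp
      linear_combination (-1) ^ (N + 1) * hrec N
  obtain ⟨R, hR⟩ := hf.dbarInv_bounded
  have hQle : ∀ N, ‖(-1) ^ N * (Q N / (N.factorial : ℂ))‖ ≤
      (∫ v, ‖f v * w v / (z - v)‖) * (R ^ N / N.factorial) := by
    intro N
    rw [norm_mul, norm_pow, norm_neg, norm_one, one_pow, one_mul, norm_div, Complex.norm_natCast,
      mul_div_assoc', mul_comm _ (R ^ N)]
    gcongr
    refine hfw.norm_dbarInv_mul_le (fun v => ?_) z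
    rw [norm_pow]
    exact pow_le_pow_left₀ (norm_nonneg _) (hR v) N
  have hlim0 : Tendsto (fun N : ℕ => (-1) ^ N * (Q N / (N.factorial : ℂ))) atTop (𝓝 0) := by
    refine squeeze_zero_norm hQle ?_
    simpa using (FloorSemiring.tendsto_pow_div_factorial_atTop R).const_mul
      (∫ v, ‖f v * w v / (z - v)‖)
  have hexp : Tendsto (fun N : ℕ => w z * ∑ n ∈ Finset.range (N + 1),
      (-s z) ^ n / (n.factorial : ℂ)) atTop (𝓝 (w z * Complex.exp (-s z))) := by
    rw [Complex.exp_eq_exp_ℂ]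
    exact (((NormedSpace.expSeries_div_hasSum_exp (-s z)).tendsto_sum_nat.comp
      (tendsto_add_atTop_nat 1)).const_mul _)
  simp only [hsum] at hexp
  have := tendsto_nhds_unique hexp hlim0
  exact (mul_eq_zero.1 this).resolve_right (Complex.exp_ne_zero _)

/-- A bounded solution of `w = ∂̄⁻¹[a conj w]` vanishes identically. -/
theorem eq_zero_of_eq_dbarInv_mul_conj (hf : IsCauchyDensity f) {w : ℂ → ℂ} (hw : Measurable w)
    {c : ℝ} (hc : ∀ z, ‖w z‖ ≤ c) (h : ∀ z, w z = dbarInv (fun v => f v * conj (w v)) z) (z : ℂ) :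
    w z = 0 := by
  have hconj : Measurable fun v => conj (w v) := Complex.continuous_conj.measurable.comp hw
  have hb : IsCauchyDensity fun v => f v * (conj (w v) / w v) := by
    refine hf.mul_bounded (hconj.div hw) (c := 1) fun v => ?_
    rw [norm_div, RCLike.norm_conj]
    exact div_self_le_one _
  refine hb.eq_zero_of_eq_dbarInv_mul hw hc (fun z => ?_) z
  rw [h z]
  congr 1 with v
  by_cases hv : w v = 0
  · simp [hv]
  · field_simp

end IsCauchyDensity

namespace IsCauchyDensity

variable {a : ℂ → ℂ}

theorem tendsto_integral_norm_kernel (ha : IsCauchyDensity a)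
    (ha' : IsCauchyDensity fun w => w * a w) :
    Tendsto (fun z => ∫ w, ‖a w / (z - w)‖) (cocompact ℂ) (𝓝 0) := by
  obtain ⟨M, hM⟩ := ha.kernel_decay ha'
  have hlim : Tendsto (fun z : ℂ => M * ‖z‖⁻¹) (cocompact ℂ) (𝓝 0) := by
    simpa using ((tendsto_norm_cocompact_atTop (E := ℂ)).inv_tendsto_atTop).const_mul M
  refine squeeze_zero' (Eventually.of_forall fun z => integral_nonneg fun _ => norm_nonneg _)
    ?_ hlim
  filter_upwards [(tendsto_norm_cocompact_atTop (E := ℂ)).eventually_gt_atTop 0] with z hz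
  rw [← div_eq_mul_inv, le_div_iff₀' hz]
  exact hM z

theorem tendsto_dbarInv_mul (ha : IsCauchyDensity a) (ha' : IsCauchyDensity fun w => w * a w)
    {g : ℂ → ℂ} {c : ℝ} (hc : ∀ w, ‖g w‖ ≤ c) :
    Tendsto (dbarInv fun w => a w * g w) (cocompact ℂ) (𝓝 0) :=
  squeeze_zero_norm (fun z => ha.norm_dbarInv_mul_le hc z)
    (by simpa using (ha.tendsto_integral_norm_kernel ha').const_mul c)

open scoped BoundedContinuousFunction

theorem measurable_conj_coe (φ : OnePoint ℂ →ᵇ ℂ) : Measurable fun w : ℂ => conj (φ w) :=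
  (Complex.continuous_conj.comp (φ.continuous.comp OnePoint.continuous_coe)).measurable

theorem norm_conj_coe_le (φ : OnePoint ℂ →ᵇ ℂ) (w : ℂ) : ‖conj (φ w)‖ ≤ ‖φ‖ :=
  (RCLike.norm_conj _).trans_le (φ.norm_coe_le_norm _)

/-- The map `φ ↦ ∂̄⁻¹[a conj φ]`, extended by `0` to the point at infinity. -/
noncomputable def conjCauchyFun (ha : IsCauchyDensity a) (ha' : IsCauchyDensity fun w => w * a w)
    (φ : OnePoint ℂ →ᵇ ℂ) : OnePoint ℂ →ᵇ ℂ :=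
  BoundedContinuousFunction.mkOfCompact
    ⟨fun x => x.elim 0 (dbarInv fun w => a w * conj (φ w)), by
      rw [OnePoint.continuous_iff, coclosedCompact_eq_cocompact]
      exact ⟨ha.tendsto_dbarInv_mul ha' (norm_conj_coe_le φ),
        (ha.mul_bounded (measurable_conj_coe φ) (norm_conj_coe_le φ)).continuous_dbarInv⟩⟩

section ConjCauchyOp

variable (ha : IsCauchyDensity a) (ha' : IsCauchyDensity fun w => w * a w)

theorem conjCauchyFun_coe (φ : OnePoint ℂ →ᵇ ℂ) (z : ℂ) :
    ha.conjCauchyFun ha' φ z = dbarInv (fun w => a w * conj (φ w)) z := rfl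

theorem conjCauchyFun_infty (φ : OnePoint ℂ →ᵇ ℂ) :
    ha.conjCauchyFun ha' φ OnePoint.infty = 0 := rfl

theorem exists_norm_conjCauchyFun_le :
    ∃ M, ∀ φ : OnePoint ℂ →ᵇ ℂ, ‖ha.conjCauchyFun ha' φ‖ ≤ M * ‖φ‖ := by
  obtain ⟨M, hM⟩ := ha.kernel_bound
  have hM0 : 0 ≤ M := (integral_nonneg fun _ => norm_nonneg _).trans (hM 0).2
  refine ⟨M, fun φ => ?_⟩
  refine (BoundedContinuousFunction.norm_le (by positivity)).2 fun x => ?_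
  induction x using OnePoint.rec with
  | infty => rw [conjCauchyFun_infty, norm_zero]; positivity
  | coe z =>
    rw [conjCauchyFun_coe, mul_comm]
    exact (ha.norm_dbarInv_mul_le (norm_conj_coe_le φ) z).trans (by gcongr; exact (hM z).2)

/-- `φ ↦ ∂̄⁻¹[a conj φ]` as a real-linear operator on the continuous functions on the
Riemann sphere. -/
noncomputable def conjCauchyOp : (OnePoint ℂ →ᵇ ℂ) →L[ℝ] (OnePoint ℂ →ᵇ ℂ) :=
  LinearMap.mkContinuous
    { toFun := ha.conjCauchyFun ha'
      map_add' := fun φ ψ => by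
        ext x
        induction x using OnePoint.rec with
        | infty => simp [conjCauchyFun_infty]
        | coe z =>
          simp only [BoundedContinuousFunction.coe_add, Pi.add_apply, conjCauchyFun_coe, map_add,
            mul_add]
          exact dbarInv_add (ha.mul_bounded (measurable_conj_coe φ) (norm_conj_coe_le φ))
            (ha.mul_bounded (measurable_conj_coe ψ) (norm_conj_coe_le ψ)) z
      map_smul' := fun r φ => by
        ext x
        induction x using OnePoint.rec with
        | infty => simp [conjCauchyFun_infty]
        | coe z =>
          simp only [BoundedContinuousFunction.coe_smul, conjCauchyFun_coe, RingHom.id_apply,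
            Complex.real_smul, map_mul, Complex.conj_ofReal]
          rw [← dbarInv_const_mul]
          congr 1 with w
          ring }
    (ha.exists_norm_conjCauchyFun_le ha').choose
    (ha.exists_norm_conjCauchyFun_le ha').choose_spec

theorem conjCauchyOp_coe (φ : OnePoint ℂ →ᵇ ℂ) (z : ℂ) :
    ha.conjCauchyOp ha' φ z = dbarInv (fun w => a w * conj (φ w)) z := rfl

theorem conjCauchyOp_infty (φ : OnePoint ℂ →ᵇ ℂ) :
    ha.conjCauchyOp ha' φ OnePoint.infty = 0 := rfl

theorem isCompactOperator_conjCauchyOp : IsCompactOperator (ha.conjCauchyOp ha') := by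
  set T := ha.conjCauchyOp ha' with hT
  refine (isCompactOperator_iff_isCompact_closure_image_closedBall
    (T : (OnePoint ℂ →ᵇ ℂ) →ₗ[ℝ] (OnePoint ℂ →ᵇ ℂ)) one_pos).2 ?_
  refine BoundedContinuousFunction.arzela_ascoli (Metric.closedBall 0 ‖T‖)
    (isCompact_closedBall _ _) _ ?_ ?_
  · rintro _ x ⟨φ, hφ, rfl⟩
    rw [mem_closedBall_zero_iff] at hφ ⊢
    exact ((T φ).norm_coe_le_norm x).trans (T.unit_le_opNorm φ hφ)
  · intro x₀
    rw [Metric.equicontinuousAt_iff_right]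
    intro ε hε
    induction x₀ using OnePoint.rec with
    | infty =>
      rw [OnePoint.nhds_infty_eq, coclosedCompact_eq_cocompact, eventually_sup, eventually_map,
        eventually_pure]
      refine ⟨?_, fun _ => by simpa using hε⟩
      filter_upwards [(ha.tendsto_integral_norm_kernel ha').eventually_lt_const hε] with z hz
      rintro ⟨_, φ, hφ, rfl⟩
      rw [mem_closedBall_zero_iff] at hφ
      rw [dist_comm, dist_eq_norm]
      change ‖T φ z - T φ OnePoint.infty‖ < ε
      rw [hT, conjCauchyOp_infty, sub_zero, conjCauchyOp_coe]
      refine (ha.norm_dbarInv_mul_le (fun w => (norm_conj_coe_le φ w).trans hφ) z).trans_lt ?_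
      rwa [one_mul]
    | coe z₀ =>
      obtain ⟨M, hM⟩ := ha.kernel_holder
      have hlim : Tendsto (fun z : ℂ => M * √‖z - z₀‖) (𝓝 z₀) (𝓝 0) := by
        have h : Continuous fun z : ℂ => M * √‖z - z₀‖ := by fun_prop
        simpa using h.tendsto z₀
      rw [OnePoint.nhds_coe_eq, eventually_map]
      filter_upwards [hlim.eventually_lt_const hε] with z hz
      rintro ⟨_, φ, hφ, rfl⟩
      rw [mem_closedBall_zero_iff] at hφ
      rw [dist_comm, dist_eq_norm]
      change ‖T φ z - T φ z₀‖ < ε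
      rw [hT, conjCauchyOp_coe, conjCauchyOp_coe]
      refine (ha.norm_dbarInv_mul_sub_le (measurable_conj_coe φ)
        (fun w => (norm_conj_coe_le φ w).trans hφ) z z₀).trans_lt ?_
      rw [one_mul]
      exact (hM z z₀).trans_lt hz

end ConjCauchyOp

/-- The equation `w = 1 + ∂̄⁻¹[a conj w]` has a bounded continuous solution tending to `1`. -/
theorem exists_eq_one_add_dbarInv_mul_conj (ha : IsCauchyDensity a)
    (ha' : IsCauchyDensity fun w => w * a w) :
    ∃ w : ℂ → ℂ, Continuous w ∧ (∃ c, ∀ z, ‖w z‖ ≤ c) ∧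
      (∀ z, w z = 1 + dbarInv (fun v => a v * conj (w v)) z) ∧
      Tendsto w (cocompact ℂ) (𝓝 1) := by
  set T := ha.conjCauchyOp ha' with hT
  have hcoe (φ : OnePoint ℂ →ᵇ ℂ) : Continuous fun z : ℂ => φ z :=
    φ.continuous.comp OnePoint.continuous_coe
  have hres := ((ha.isCompactOperator_conjCauchyOp ha').hasEigenvalue_or_mem_resolventSet
    (one_ne_zero (α := ℝ))).resolve_left fun hev => by
      obtain ⟨φ, hφ⟩ := hev.exists_hasEigenvector
      refine hφ.2 ?_
      have hfix : T φ = φ := by simpa using hφ.apply_eq_smul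
      ext x
      induction x using OnePoint.rec with
      | infty => rw [← hfix]; rfl
      | coe z =>
        refine ha.eq_zero_of_eq_dbarInv_mul_conj (w := fun z : ℂ => φ z) (hcoe φ).measurable
          (fun v => φ.norm_coe_le_norm v) (fun y => ?_) z
        rw [← ha.conjCauchyOp_coe ha', ← hT, hfix]
  rw [spectrum.mem_resolventSet_iff, ContinuousLinearMap.isUnit_iff_bijective] at hres
  obtain ⟨φ, hφ⟩ := hres.2 (BoundedContinuousFunction.const _ 1)
  have hφ' (x : OnePoint ℂ) : φ x = 1 + T φ x := by
    have h := DFunLike.congr_fun hφ x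
    simp only [map_one, sub_apply, one_apply_eq_self,
      BoundedContinuousFunction.coe_sub, Pi.sub_apply,
      BoundedContinuousFunction.const_apply] at h
    exact sub_eq_iff_eq_add.1 h
  refine ⟨fun z => φ z, hcoe φ, ⟨‖φ‖, fun z => φ.norm_coe_le_norm z⟩, fun z => hφ' z, ?_⟩
  have h := (φ.continuous.tendsto OnePoint.infty).comp OnePoint.tendsto_coe_infty
  rw [coclosedCompact_eq_cocompact, hφ', hT, conjCauchyOp_infty, add_zero] at h
  exact h

theorem mul_conj (ha : IsCauchyDensity a) {u : ℂ → ℂ} (hu : Continuous u) {c : ℝ}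
    (hc : ∀ z, ‖u z‖ ≤ c) :
    IsCauchyDensity fun w => a w * conj (u w) :=
  ha.mul_bounded (Complex.continuous_conj.comp hu).measurable
    fun w => (RCLike.norm_conj _).trans_le (hc w)

/-- Bounded continuous solutions of `w = 1 + ∂̄⁻¹[a conj w]` are unique. -/
theorem eq_of_eq_one_add_dbarInv_mul_conj (ha : IsCauchyDensity a) {w w' : ℂ → ℂ}
    (hw : Continuous w) (hw' : Continuous w') {c c' : ℝ} (hc : ∀ z, ‖w z‖ ≤ c) (hc' : ∀ z, ‖w' z‖ ≤ c')
    (h : ∀ z, w z = 1 + dbarInv (fun v => a v * conj (w v)) z)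
    (h' : ∀ z, w' z = 1 + dbarInv (fun v => a v * conj (w' v)) z) (z : ℂ) : w z = w' z := by
  have hsub : Continuous fun v => w v - w' v := hw.sub hw'
  have hb : ∀ z, ‖w z - w' z‖ ≤ c + c' := fun z =>
    (norm_sub_le _ _).trans (add_le_add (hc z) (hc' z))
  refine sub_eq_zero.1 (ha.eq_zero_of_eq_dbarInv_mul_conj hsub.measurable hb (fun y => ?_) z)
  have hadd := dbarInv_add (ha.mul_conj hsub hb) (ha.mul_conj hw' hc') y
  have e : (fun v => a v * conj (w v - w' v) + a v * conj (w' v)) = fun v => a v * conj (w v) := by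
    ext v
    rw [map_sub]
    ring
  rw [e] at hadd
  linear_combination h y - h' y + hadd

end IsCauchyDensity

namespace IsCauchyDensity

variable {a u₁ u₂ : ℂ → ℂ} {c₁ c₂ : ℝ}

theorem dbarInv_mul_conj_add (ha : IsCauchyDensity a) (hu₁ : Continuous u₁) (hu₂ : Continuous u₂)
    (hc₁ : ∀ z, ‖u₁ z‖ ≤ c₁) (hc₂ : ∀ z, ‖u₂ z‖ ≤ c₂) (z : ℂ) :
    dbarInv (fun w => a w * conj (u₁ w + u₂ w)) z =
      dbarInv (fun w => a w * conj (u₁ w)) z + dbarInv (fun w => a w * conj (u₂ w)) z := by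
  rw [← dbarInv_add (ha.mul_conj hu₁ hc₁) (ha.mul_conj hu₂ hc₂)]
  simp only [map_add, mul_add]

theorem dbarInv_neg_mul_conj_sub (ha : IsCauchyDensity a) (hu₁ : Continuous u₁)
    (hu₂ : Continuous u₂) (hc₁ : ∀ z, ‖u₁ z‖ ≤ c₁) (hc₂ : ∀ z, ‖u₂ z‖ ≤ c₂) (z : ℂ) :
    dbarInv (fun w => -a w * conj (u₁ w - u₂ w)) z =
      dbarInv (fun w => a w * conj (u₂ w)) z - dbarInv (fun w => a w * conj (u₁ w)) z := by
  have h := ha.neg.dbarInv_mul_conj_add (u₂ := fun w => -u₂ w) hu₁ hu₂.neg hc₁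
    (fun w => (norm_neg _).trans_le (hc₂ w)) z
  have h1 := dbarInv_const_mul (-1) (fun w => a w * conj (u₁ w)) z
  simp only [map_neg, neg_mul_neg, ← sub_eq_add_neg] at h
  simp only [neg_mul, one_mul] at h h1 ⊢
  rw [h, h1]
  ring

end IsCauchyDensity

theorem continuous_ek (k : ℂ) : Continuous (ek k) := by
  unfold ek
  fun_prop

theorem SchwartzMap.isCauchyDensity_pow_mul (q : 𝓢(ℂ, ℂ)) (n : ℕ) :
    IsCauchyDensity fun w => w ^ n * q w where
  measurable := ((continuous_pow n).mul q.continuous).measurable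
  integrable := by
    refine (q.integrable_pow_mul volume n).mono'
      ((continuous_pow n).mul q.continuous).aestronglyMeasurable (ae_of_all _ fun w => ?_)
    rw [norm_mul, norm_pow]
  bounded := by
    obtain ⟨C, -, hC⟩ := q.decay n 0
    refine ⟨C, fun w => ?_⟩
    simpa using hC w

theorem SchwartzMap.isCauchyDensity_pow_mul_ek_mul (q : 𝓢(ℂ, ℂ)) (k : ℂ) (n : ℕ) :
    IsCauchyDensity fun w => w ^ n * (ek k w * q w) := by
  have h := (q.isCauchyDensity_pow_mul n).mul_bounded (continuous_ek k).measurable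
    fun w => (norm_ek k w).le
  convert h using 2 with w
  ring

/-- Existence and uniqueness of the scattering solutions, together with their
behaviour at infinity. -/
theorem stmt13 (q : 𝓢(ℂ, ℂ)) (k : ℂ) :
    ∃ u₁ u₂ : ℂ → ℂ, IsScattering (⇑q) k u₁ u₂ ∧
      Tendsto u₁ (cocompact ℂ) (𝓝 1) ∧ Tendsto u₂ (cocompact ℂ) (𝓝 0) ∧
      ∀ v₁ v₂ : ℂ → ℂ, IsScattering (⇑q) k v₁ v₂ → v₁ = u₁ ∧ v₂ = u₂ := by
  set a : ℂ → ℂ := fun w => ek (-k) w * q w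
  have ha : IsCauchyDensity a := by simpa using q.isCauchyDensity_pow_mul_ek_mul (-k) 0
  have ha' : IsCauchyDensity fun w => w * a w := by
    simpa using q.isCauchyDensity_pow_mul_ek_mul (-k) 1
  have hna' : IsCauchyDensity fun w => w * -a w := by simpa using ha'.neg
  obtain ⟨p, hp, ⟨cp, hcp⟩, hpe, hp1⟩ := ha.exists_eq_one_add_dbarInv_mul_conj ha'
  obtain ⟨m, hm, ⟨cm, hcm⟩, hme, hm1⟩ := ha.neg.exists_eq_one_add_dbarInv_mul_conj hna'
  have hu₁ : Continuous fun z => (p z + m z) / 2 := (hp.add hm).div_const 2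
  have hu₂ : Continuous fun z => (p z - m z) / 2 := (hp.sub hm).div_const 2
  have hb₁ (z : ℂ) : ‖(p z + m z) / 2‖ ≤ (cp + cm) / 2 := by
    rw [norm_div, Complex.norm_ofNat]
    linarith [norm_add_le (p z) (m z), hcp z, hcm z]
  have hb₂ (z : ℂ) : ‖(p z - m z) / 2‖ ≤ (cp + cm) / 2 := by
    rw [norm_div, Complex.norm_ofNat]
    linarith [norm_sub_le (p z) (m z), hcp z, hcm z]
  have hadd := ha.dbarInv_mul_conj_add hu₁ hu₂ hb₁ hb₂
  have hsub := ha.dbarInv_neg_mul_conj_sub hu₁ hu₂ hb₁ hb₂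
  have ep (z : ℂ) : (p z + m z) / 2 + (p z - m z) / 2 = p z := by ring
  have em (z : ℂ) : (p z + m z) / 2 - (p z - m z) / 2 = m z := by ring
  simp only [ep] at hadd
  simp only [em] at hsub
  refine ⟨fun z => (p z + m z) / 2, fun z => (p z - m z) / 2,
    ⟨hu₁, isBounded_iff_forall_norm_le.2 ⟨_, Set.forall_mem_range.2 hb₁⟩,
      hu₂, isBounded_iff_forall_norm_le.2 ⟨_, Set.forall_mem_range.2 hb₂⟩,
      fun z => ?_, fun z => ?_⟩, ?_, ?_, ?_⟩
  · linear_combination (hpe z + hme z + hadd z + hsub z) / 2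
  · linear_combination (hpe z - hme z + hadd z - hsub z) / 2
  · simpa using (hp1.add hm1).div_const 2
  · simpa using (hp1.sub hm1).div_const 2
  · rintro v₁ v₂ ⟨hv₁, hvb₁, hv₂, hvb₂, he₁, he₂⟩
    obtain ⟨c₁, hc₁⟩ := isBounded_iff_forall_norm_le.1 hvb₁
    obtain ⟨c₂, hc₂⟩ := isBounded_iff_forall_norm_le.1 hvb₂
    rw [Set.forall_mem_range] at hc₁ hc₂
    have hvp := ha.eq_of_eq_one_add_dbarInv_mul_conj (w := fun z => v₁ z + v₂ z)
      (hv₁.add hv₂) hp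
      (fun z => (norm_add_le _ _).trans (add_le_add (hc₁ z) (hc₂ z))) hcp
      (fun z => by
        rw [ha.dbarInv_mul_conj_add hv₁ hv₂ hc₁ hc₂]
        linear_combination he₁ z + he₂ z) hpe
    have hvm := ha.neg.eq_of_eq_one_add_dbarInv_mul_conj (w := fun z => v₁ z - v₂ z)
      (hv₁.sub hv₂) hm
      (fun z => (norm_sub_le _ _).trans (add_le_add (hc₁ z) (hc₂ z))) hcm
      (fun z => by
        rw [ha.dbarInv_neg_mul_conj_sub hv₁ hv₂ hc₁ hc₂]
        linear_combination he₁ z - he₂ z) hme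
    constructor <;> ext z
    · linear_combination (hvp z + hvm z) / 2
    · linear_combination (hvp z - hvm z) / 2
end
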